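/- arXiv:2603.16582 — 2 statements merged into one kernel-verified Lean document; each statement's English description precedes it below -/
import Mathlib

section
/- Let B be the open unit ball of ℂⁿ equipped with an arbitrary norm, and let 𝓗^∞_s(B, ℂⁿ) = { F = (F₁,…,Fₙ) ∈ 𝓗^∞(B, ℂⁿ) : ∂F_j/∂z_k(z) = ∂F_k/∂z_j(z) for all z ∈ B and all j,k }, where (ℂⁿ)* is identified with ℂⁿ (carrying the dual norm) via F ↦ (w ↦ Σ_j F_j w_j). Then the mapping Φ : 𝓗𝓛₀(B) → 𝓗^∞_s(B, ℂⁿ) given by Φ(g) = dg is a surjective isometry: every F ∈ 𝓗^∞_s(B, ℂⁿ) equals dg for a unique g ∈ 𝓗𝓛₀(B), and L(g) = sup_{z∈B} ‖dg(z)‖ for every g ∈ 𝓗𝓛₀(B). -/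
/-!
By Cauchy's estimate, a holomorphic function bounded on a ball has a bounded, in fact Lipschitz,
differential on a smaller ball. Its difference quotients in a fixed direction therefore converge
locally uniformly to the directional derivative, which is then holomorphic by Weierstrass' theorem;
so `dg` is holomorphic, and the symmetry of the second derivative puts it in `𝓗^∞_s`.
The identity `L(g) = sup ‖dg‖` is the mean value inequality on the convex ball `B`. Conversely, the
symmetry of the partial derivatives says that `F`, read as a 1-form, is closed, so the Poincaré
lemma on `B` gives a primitive, unique once it is required to vanish at `0`.
-/

open Filter Metric Set
open scoped NNReal Topology

section CauchyEstimates

variable {E F : Type*} [NormedAddCommGroup E] [NormedSpace ℂ E]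
  [NormedAddCommGroup F] [NormedSpace ℂ F]

theorem norm_fderiv_le_two_mul_div_of_norm_le {f : E → F} {c : E} {r C : ℝ} (hr : 0 < r)
    (hf : DifferentiableOn ℂ f (ball c r)) (hC : ∀ z ∈ ball c r, ‖f z‖ ≤ C) :
    ‖fderiv ℂ f c‖ ≤ 2 * C / r := by
  refine Complex.norm_fderiv_le_div_of_mapsTo_ball hf (fun z hz => ?_) hr
  rw [mem_closedBall, dist_eq_norm]
  linarith [norm_sub_le (f z) (f c), hC z hz, hC c (mem_ball_self hr)]

theorem lipschitzOnWith_of_norm_le_thickening {f : E → F} {s : Set E} {r : ℝ} {C : ℝ≥0}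
    (hs : Convex ℝ s) (hr : 0 < r) (hf : DifferentiableOn ℂ f (thickening r s))
    (hC : ∀ z ∈ thickening r s, ‖f z‖ ≤ C) :
    LipschitzOnWith (2 * C / r.toNNReal) f s := by
  refine hs.lipschitzOnWith_of_nnnorm_fderiv_le (𝕜 := ℂ) (fun z hz => ?_) fun z hz => ?_
  · exact hf.differentiableAt (isOpen_thickening.mem_nhds (self_subset_thickening hr s hz))
  · have hball : ball z r ⊆ thickening r s := ball_subset_thickening hz r
    have := norm_fderiv_le_two_mul_div_of_norm_le hr (hf.mono hball) fun w hw => hC w (hball hw)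
    simpa [← NNReal.coe_le_coe, hr.le] using this

theorem lipschitzOnWith_fderiv_of_thickening {f : E → F} {s : Set E} {r : ℝ} {K : ℝ≥0}
    (hr : 0 < r) (hf : DifferentiableOn ℂ f (thickening r s))
    (hK : LipschitzOnWith K f (thickening r s)) :
    LipschitzOnWith (2 * K / r.toNNReal) (fderiv ℂ f) s := by
  refine LipschitzOnWith.of_dist_le_mul fun y hy z hz => ?_
  have hy_ball : ball y r ⊆ thickening r s := ball_subset_thickening hy r
  have hdiff : ∀ w ∈ s, DifferentiableAt ℂ f w := fun w hw =>
    hf.differentiableAt (isOpen_thickening.mem_nhds (self_subset_thickening hr s hw))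
  have hz_maps : MapsTo (fun w => w + (z - y)) (ball y r) (thickening r s) := fun w hw =>
    ball_subset_thickening hz r (by
      have hshift : w + (z - y) - z = w - y := by abel
      rwa [mem_ball_iff_norm, hshift, ← mem_ball_iff_norm])
  have hderiv : fderiv ℂ (fun w => f w - f (w + (z - y))) y = fderiv ℂ f y - fderiv ℂ f z := by
    rw [fderiv_fun_sub (hdiff y hy) (by
      rw [differentiableAt_comp_add_right]; simpa using hdiff z hz), fderiv_comp_add_right]
    simp
  have hest := norm_fderiv_le_two_mul_div_of_norm_le (f := fun w => f w - f (w + (z - y)))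
    (C := K * dist y z) hr
    ((hf.mono hy_ball).sub (hf.comp (by fun_prop) hz_maps)) fun w hw => by
      simpa [dist_eq_norm, norm_sub_rev] using hK.dist_le_mul w (hy_ball hw) _ (hz_maps hw)
  calc dist (fderiv ℂ f y) (fderiv ℂ f z)
      ≤ 2 * (K * dist y z) / r := by rwa [dist_eq_norm, ← hderiv]
    _ = ↑(2 * K / r.toNNReal) * dist y z := by simp [hr.le]; ring

theorem exists_lipschitzOnWith_fderiv_ball {f : E → F} {x : E}
    (hf : ∀ᶠ z in 𝓝 x, DifferentiableAt ℂ f z) :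
    ∃ r > 0, ∃ K : ℝ≥0, DifferentiableOn ℂ f (ball x r) ∧
      LipschitzOnWith K (fderiv ℂ f) (ball x r) := by
  have hbdd : ∀ᶠ z in 𝓝 x, ‖f z‖ ≤ ‖f x‖ + 1 :=
    (hf.self_of_nhds.continuousAt.norm.eventually_lt_const (lt_add_one _)).mono fun _ => le_of_lt
  obtain ⟨R, hR, hball⟩ := Metric.eventually_nhds_iff_ball.1 (hf.and hbdd)
  obtain ⟨r, hr, rfl⟩ : ∃ r > 0, r + (r + r) = R := ⟨R / 3, by positivity, by ring⟩
  have hdiff : DifferentiableOn ℂ f (ball x (r + (r + r))) := fun z hz =>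
    (hball z hz).1.differentiableWithinAt
  have hdiff₂ : DifferentiableOn ℂ f (ball x (r + r)) :=
    hdiff.mono (ball_subset_ball (by linarith))
  have hlip : LipschitzOnWith (2 * (‖f x‖₊ + 1) / r.toNNReal) f (ball x (r + r)) :=
    lipschitzOnWith_of_norm_le_thickening (convex_ball x (r + r)) hr
      (hdiff.mono (Metric.thickening_ball x r _))
      fun z hz => (hball z (Metric.thickening_ball x r _ hz)).2
  exact ⟨r, hr, _, hdiff₂.mono (ball_subset_ball (by linarith)),
    lipschitzOnWith_fderiv_of_thickening hr (hdiff₂.mono (Metric.thickening_ball x r r))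
      (hlip.mono (Metric.thickening_ball x r r))⟩

end CauchyEstimates

section UniformLimits

variable {E F ι : Type*} [NormedAddCommGroup E] [NormedSpace ℂ E]
  [NormedAddCommGroup F] [NormedSpace ℂ F] {f : ι → E → F} {l : Filter ι}

theorem uniformCauchySeqOn_fderiv_of_thickening {s : Set E} {r : ℝ} (hr : 0 < r)
    (hd : ∀ᶠ i in l, DifferentiableOn ℂ (f i) (thickening r s))
    (hf : UniformCauchySeqOn f l (thickening r s)) :
    UniformCauchySeqOn (fun i => fderiv ℂ (f i)) l s := by
  intro u hu
  obtain ⟨ε, hε, hεu⟩ := Metric.mem_uniformity_dist.1 hu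
  filter_upwards [hf _ (dist_mem_uniformity (show 0 < r * ε / 4 by positivity)),
    hd.prod_mk hd] with ⟨i, j⟩ hij ⟨hi, hj⟩ z hz
  have hball : ball z r ⊆ thickening r s := ball_subset_thickening hz r
  have hnhds : thickening r s ∈ 𝓝 z :=
    isOpen_thickening.mem_nhds (self_subset_thickening hr s hz)
  refine hεu ?_
  calc dist (fderiv ℂ (f i) z) (fderiv ℂ (f j) z)
      = ‖fderiv ℂ (f i - f j) z‖ := by
        rw [dist_eq_norm, fderiv_sub (hi.differentiableAt hnhds) (hj.differentiableAt hnhds)]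
    _ ≤ 2 * (r * ε / 4) / r :=
        norm_fderiv_le_two_mul_div_of_norm_le hr ((hi.sub hj).mono hball) fun w hw => by
          simpa [dist_eq_norm] using (hij w (hball hw)).le
    _ < ε := by field_simp; linarith

theorem differentiableOn_of_tendstoUniformlyOn [CompleteSpace F] [l.NeBot] {g : E → F} {U : Set E}
    (hU : IsOpen U) (hd : ∀ᶠ i in l, DifferentiableOn ℂ (f i) U)
    (hf : TendstoUniformlyOn f g l U) : DifferentiableOn ℂ g U := by
  intro x hx
  obtain ⟨R, hR, hball⟩ := Metric.isOpen_iff.1 hU x hx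
  obtain ⟨r, hr, rfl⟩ : ∃ r > 0, r + r = R := ⟨R / 2, by positivity, by ring⟩
  have hthick : thickening r (ball x r) ⊆ U := (Metric.thickening_ball x r r).trans hball
  have hcauchy : UniformCauchySeqOn (fun i => fderiv ℂ (f i)) l (ball x r) :=
    uniformCauchySeqOn_fderiv_of_thickening hr (hd.mono fun i hi => hi.mono hthick)
      (hf.mono hthick).uniformCauchySeqOn
  have hlim : ∀ z ∈ ball x r, ∃ A, Tendsto (fun i => fderiv ℂ (f i) z) l (𝓝 A) := fun z hz =>
    CompleteSpace.complete (hcauchy.cauchy_map hz)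
  choose! g' hg' using hlim
  have hmem : ball x r ∈ 𝓝 x := ball_mem_nhds x hr
  have hfderiv : TendstoUniformlyOnFilter (fun i => fderiv ℂ (f i)) g' l (𝓝 x) :=
    (hcauchy.tendstoUniformlyOn_of_tendsto hg').tendstoUniformlyOnFilter.mono_right
      (le_principal_iff.2 hmem)
  refine (hasFDerivAt_of_tendstoUniformlyOnFilter hfderiv ?_
    (eventually_of_mem (hU.mem_nhds hx) fun z hz => hf.tendsto_at hz)
    ).differentiableAt.differentiableWithinAt
  filter_upwards [hd.prod_mk (hU.eventually_mem hx)] with ⟨i, z⟩ ⟨hi, hz⟩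
  exact (hi.differentiableAt (hU.mem_nhds hz)).hasFDerivAt

end UniformLimits

section DifferenceQuotients

variable {𝕜 E F : Type*} [RCLike 𝕜] [NormedAddCommGroup E] [NormedSpace 𝕜 E]
  [NormedAddCommGroup F] [NormedSpace 𝕜 F] {f : E → F} {K : ℝ≥0}

theorem norm_differenceQuotient_sub_fderiv_le {z v : E} {t : 𝕜} (ht : t ≠ 0)
    (hf : ∀ w ∈ closedBall z ‖t • v‖, DifferentiableAt 𝕜 f w)
    (hK : LipschitzOnWith K (fderiv 𝕜 f) (closedBall z ‖t • v‖)) :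
    ‖t⁻¹ • (f (z + t • v) - f z) - fderiv 𝕜 f z v‖ ≤ K * ‖t • v‖ * ‖v‖ := by
  let : NormedSpace ℝ E := NormedSpace.restrictScalars ℝ 𝕜 E
  have hz : z ∈ closedBall z ‖t • v‖ := mem_closedBall_self (norm_nonneg _)
  have hmv : ‖f (z + t • v) - f z - fderiv 𝕜 f z (z + t • v - z)‖
      ≤ K * ‖t • v‖ * ‖z + t • v - z‖ :=
    Convex.norm_image_sub_le_of_norm_fderiv_le' hf
      (fun w hw => (hK.norm_sub_le hw hz).trans (by gcongr; exact mem_closedBall_iff_norm.1 hw))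
      (convex_closedBall z ‖t • v‖) hz (by simp)
  rw [add_sub_cancel_left] at hmv
  calc ‖t⁻¹ • (f (z + t • v) - f z) - fderiv 𝕜 f z v‖
      = ‖t‖⁻¹ * ‖f (z + t • v) - f z - fderiv 𝕜 f z (t • v)‖ := by
        rw [← norm_inv, ← norm_smul, smul_sub _ (f (z + t • v) - f z), map_smul,
          inv_smul_smul₀ ht]
    _ ≤ ‖t‖⁻¹ * (K * ‖t • v‖ * ‖t • v‖) := by gcongr
    _ = K * ‖t • v‖ * ‖v‖ := by
        rw [mul_left_comm, norm_smul t v, inv_mul_cancel_left₀ (norm_ne_zero_iff.2 ht)]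

theorem tendstoUniformlyOn_differenceQuotient {s : Set E} {r : ℝ} (hr : 0 < r)
    (hf : DifferentiableOn 𝕜 f (thickening r s))
    (hK : LipschitzOnWith K (fderiv 𝕜 f) (thickening r s)) (v : E) :
    TendstoUniformlyOn (fun (t : 𝕜) z => t⁻¹ • (f (z + t • v) - f z)) (fun z => fderiv 𝕜 f z v)
      (𝓝[≠] 0) s := by
  have hnorm : Tendsto (fun t : 𝕜 => ‖t • v‖) (𝓝[≠] 0) (𝓝 0) :=
    (Continuous.tendsto' (by fun_prop) _ _ (by simp)).mono_left nhdsWithin_le_nhds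
  have hbound : Tendsto (fun t : 𝕜 => K * ‖t • v‖ * ‖v‖) (𝓝[≠] 0) (𝓝 0) := by
    simpa using (hnorm.const_mul (K : ℝ)).mul_const ‖v‖
  rw [Metric.tendstoUniformlyOn_iff]
  intro ε hε
  filter_upwards [hbound.eventually_lt_const hε, hnorm.eventually_lt_const hr,
    self_mem_nhdsWithin] with t htε htr ht z hz
  have hball : closedBall z ‖t • v‖ ⊆ thickening r s :=
    (closedBall_subset_ball htr).trans (ball_subset_thickening hz r)
  rw [dist_comm, dist_eq_norm]
  exact (norm_differenceQuotient_sub_fderiv_le ht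
    (fun w hw => hf.differentiableAt (isOpen_thickening.mem_nhds (hball hw)))
    (hK.mono hball)).trans_lt htε

end DifferenceQuotients

theorem opNorm_le_of_forall_norm_le_one {𝕜 E F : Type*} [RCLike 𝕜] [NormedAddCommGroup E]
    [NormedSpace 𝕜 E] [NormedAddCommGroup F] [NormedSpace 𝕜 F] {A : E →L[𝕜] F} {C : ℝ}
    (hA : ∀ v, ‖v‖ ≤ 1 → ‖A v‖ ≤ C) : ‖A‖ ≤ C := by
  let : NormedSpace ℝ E := NormedSpace.restrictScalars ℝ 𝕜 E
  exact A.opNorm_le_of_unit_norm ((norm_nonneg _).trans (hA 0 (by simp))) fun v hv => hA v hv.le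

section CoordHom

variable {𝕜 ι E F : Type*} [RCLike 𝕜] [DecidableEq ι] [NormedAddCommGroup E] [NormedSpace 𝕜 E]
  [NormedAddCommGroup F] [NormedSpace 𝕜 F]

theorem apply_apply_comm_of_single [Finite ι] (e : E ≃ₗ[𝕜] (ι → 𝕜)) {A : E →L[𝕜] E →L[𝕜] F}
    (hA : ∀ j k, A (e.symm (Pi.single j 1)) (e.symm (Pi.single k 1)) =
      A (e.symm (Pi.single k 1)) (e.symm (Pi.single j 1))) (v w : E) :
    A v w = A w v := by
  have hflip : A.toLinearMap₁₂ = A.flip.toLinearMap₁₂ :=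
    LinearMap.ext_basis (.ofEquivFun e) (.ofEquivFun e) fun j k => by simpa using hA j k
  exact LinearMap.congr_fun₂ hflip v w

variable [Fintype ι]

/-- For a linear coordinate system `e` on `E`, the identification of `F ^ ι` with the space of
continuous linear maps `E → F` that sends `a` to `v ↦ ∑ j, (e v) j • a j`; the inverse evaluates
a linear map on the basis dual to the coordinates. -/
noncomputable def coordHomEquiv (F : Type*) [NormedAddCommGroup F] [NormedSpace 𝕜 F]
    (e : E ≃ₗ[𝕜] (ι → 𝕜)) : (ι → F) ≃L[𝕜] (E →L[𝕜] F) :=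
  have : FiniteDimensional 𝕜 E := e.symm.finiteDimensional
  (ContinuousLinearEquiv.piRing ι).symm.trans
    (e.toContinuousLinearEquiv.symm.arrowCongr (ContinuousLinearEquiv.refl 𝕜 F))

theorem coordHomEquiv_apply (e : E ≃ₗ[𝕜] (ι → 𝕜)) (a : ι → F) (v : E) :
    coordHomEquiv F e a v = ∑ j, e v j • a j := by
  change (LinearEquiv.piRing 𝕜 F ι 𝕜).symm a (e v) = _
  exact LinearEquiv.piRing_symm_apply ..

theorem coordHomEquiv_symm_apply (e : E ≃ₗ[𝕜] (ι → 𝕜)) (A : E →L[𝕜] F) (j : ι) :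
    (coordHomEquiv F e).symm A j = A (e.symm (Pi.single j 1)) := rfl

theorem coordHomEquiv_apply_single (e : E ≃ₗ[𝕜] (ι → 𝕜)) (a : ι → F) (j : ι) :
    coordHomEquiv F e a (e.symm (Pi.single j 1)) = a j := by
  rw [← coordHomEquiv_symm_apply, ContinuousLinearEquiv.symm_apply_apply]

theorem sum_smul_apply_single (e : E ≃ₗ[𝕜] (ι → 𝕜)) (A : E →L[𝕜] F) (v : E) :
    ∑ j, e v j • A (e.symm (Pi.single j 1)) = A v := by
  simp only [← coordHomEquiv_symm_apply, ← coordHomEquiv_apply,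
    ContinuousLinearEquiv.apply_symm_apply]

theorem fderiv_coordHomEquiv_comp_comm (e : E ≃ₗ[𝕜] (ι → 𝕜)) {a : E → ι → F} {z : E}
    (ha : DifferentiableAt 𝕜 a z)
    (hsymm : ∀ j k, fderiv 𝕜 (fun y => a y j) z (e.symm (Pi.single k 1)) =
      fderiv 𝕜 (fun y => a y k) z (e.symm (Pi.single j 1))) (v w : E) :
    fderiv 𝕜 (coordHomEquiv F e ∘ a) z v w = fderiv 𝕜 (coordHomEquiv F e ∘ a) z w v := by
  have hentry (j k : ι) : fderiv 𝕜 (coordHomEquiv F e ∘ a) z (e.symm (Pi.single j 1))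
      (e.symm (Pi.single k 1)) = fderiv 𝕜 (fun y => a y k) z (e.symm (Pi.single j 1)) := by
    rw [ContinuousLinearEquiv.comp_fderiv, fderiv_apply ha]
    exact coordHomEquiv_apply_single e _ k
  refine apply_apply_comm_of_single e (fun j k => ?_) v w
  rw [hentry, hentry, hsymm]

end CoordHom

section HolomorphicDerivative

variable {E F : Type*} [NormedAddCommGroup E] [NormedSpace ℂ E]
  [NormedAddCommGroup F] [NormedSpace ℂ F] [CompleteSpace F] {f : E → F} {x : E}

theorem differentiableAt_fderiv_apply (hf : ∀ᶠ z in 𝓝 x, DifferentiableAt ℂ f z) (v : E) :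
    DifferentiableAt ℂ (fun z => fderiv ℂ f z v) x := by
  obtain ⟨R, hR, K, hdiff, hlip⟩ := exists_lipschitzOnWith_fderiv_ball hf
  obtain ⟨r, hr, rfl⟩ : ∃ r > 0, r + r = R := ⟨R / 2, by positivity, by ring⟩
  have hlim := tendstoUniformlyOn_differenceQuotient (s := ball x r) hr
    (hdiff.mono (Metric.thickening_ball x r r)) (hlip.mono (Metric.thickening_ball x r r)) v
  have hsmall : ∀ᶠ t in 𝓝[≠] (0 : ℂ), ‖t • v‖ < r :=
    nhdsWithin_le_nhds (Continuous.tendsto' (by fun_prop) _ _ (by simp) |>.eventually_lt_const hr)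
  refine (differentiableOn_of_tendstoUniformlyOn isOpen_ball ?_ hlim).differentiableAt
    (ball_mem_nhds x hr)
  filter_upwards [hsmall] with t ht
  have hmaps : MapsTo (· + t • v) (ball x r) (ball x (r + r)) := fun z hz => by
    rw [mem_ball] at hz ⊢
    calc dist (z + t • v) x ≤ dist (z + t • v) z + dist z x := dist_triangle _ _ _
      _ < r + r := add_lt_add (by rwa [dist_self_add_left]) hz
  exact ((hdiff.comp (by fun_prop) hmaps).sub
    (hdiff.mono (ball_subset_ball (by linarith)))).const_smul t⁻¹

theorem differentiableAt_fderiv [FiniteDimensional ℂ E]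
    (hf : ∀ᶠ z in 𝓝 x, DifferentiableAt ℂ f z) : DifferentiableAt ℂ (fderiv ℂ f) x := by
  rw [← (coordHomEquiv F (Module.finBasis ℂ E).equivFun).symm.comp_differentiableAt_iff]
  exact differentiableAt_pi.2 fun j => differentiableAt_fderiv_apply hf _

theorem fderiv_fderiv_apply_comm [FiniteDimensional ℂ E]
    (hf : ∀ᶠ z in 𝓝 x, DifferentiableAt ℂ f z) (v w : E) :
    fderiv ℂ (fun z => fderiv ℂ f z v) x w = fderiv ℂ (fun z => fderiv ℂ f z w) x v := by
  have hd : DifferentiableAt ℂ (fderiv ℂ f) x := differentiableAt_fderiv hf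
  have happly (u : E) :
      fderiv ℂ (fun z => fderiv ℂ f z u) x = (fderiv ℂ (fderiv ℂ f) x).flip u := by
    simp [fderiv_clm_apply hd (differentiableAt_const u)]
  rw [happly, happly]
  exact second_derivative_symmetric_of_eventually (hf.mono fun _ hz => hz.hasFDerivAt)
    hd.hasFDerivAt w v

end HolomorphicDerivative

section Convex

variable {𝕜 E F : Type*} [RCLike 𝕜] [NormedAddCommGroup E] [NormedSpace ℝ E] [NormedSpace 𝕜 E]
  [NormedAddCommGroup F] [NormedSpace 𝕜 F] {s : Set E}

theorem forall_norm_sub_le_iff_forall_norm_fderiv_le {f : E → F} {C : ℝ} (hs : Convex ℝ s)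
    (hso : IsOpen s) (hf : DifferentiableOn 𝕜 f s) (hC : 0 ≤ C) :
    (∀ x ∈ s, ∀ y ∈ s, ‖f x - f y‖ ≤ C * ‖x - y‖) ↔ ∀ z ∈ s, ‖fderiv 𝕜 f z‖ ≤ C :=
  ⟨fun h z hz => norm_fderiv_le_of_lip' 𝕜 hC <|
      eventually_of_mem (hso.mem_nhds hz) fun x hx => h x hx z hz,
    fun h _ hx _ hy => hs.norm_image_sub_le_of_norm_fderiv_le
      (fun _ hz => hf.differentiableAt (hso.mem_nhds hz)) h hy hx⟩

theorem sInf_lipschitz_eq_sSup_norm_fderiv {f : E → F} {K : ℝ≥0} (hs : Convex ℝ s)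
    (hso : IsOpen s) (hne : s.Nonempty) (hf : DifferentiableOn 𝕜 f s) (hK : LipschitzOnWith K f s) :
    sInf {C : ℝ | 0 ≤ C ∧ ∀ x ∈ s, ∀ y ∈ s, ‖f x - f y‖ ≤ C * ‖x - y‖} =
      sSup {a : ℝ | ∃ z ∈ s, a = ‖fderiv 𝕜 f z‖} := by
  have hupper : {C : ℝ | 0 ≤ C ∧ ∀ x ∈ s, ∀ y ∈ s, ‖f x - f y‖ ≤ C * ‖x - y‖} =
      upperBounds {a : ℝ | ∃ z ∈ s, a = ‖fderiv 𝕜 f z‖} := by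
    ext C
    constructor
    · rintro ⟨hC, h⟩ _ ⟨z, hz, rfl⟩
      exact (forall_norm_sub_le_iff_forall_norm_fderiv_le hs hso hf hC).1 h z hz
    · intro h
      have hle : ∀ z ∈ s, ‖fderiv 𝕜 f z‖ ≤ C := fun z hz => h ⟨z, hz, rfl⟩
      have hC : 0 ≤ C := (norm_nonneg _).trans (hle _ hne.some_mem)
      exact ⟨hC, (forall_norm_sub_le_iff_forall_norm_fderiv_le hs hso hf hC).2 hle⟩
  have hbdd : BddAbove {a : ℝ | ∃ z ∈ s, a = ‖fderiv 𝕜 f z‖} := by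
    refine ⟨K, ?_⟩
    rintro _ ⟨z, hz, rfl⟩
    exact norm_fderiv_le_of_lipschitzOn 𝕜 (hso.mem_nhds hz) hK
  rw [hupper, csInf_upperBounds_eq_csSup hbdd ⟨_, hne.some, hne.some_mem, rfl⟩]

theorem exists_lipschitzOnWith_forall_fderiv_eq [NormedSpace ℝ F] [IsScalarTower ℝ 𝕜 E]
    [IsScalarTower ℝ 𝕜 F] [CompleteSpace F] {ω : E → E →L[𝕜] F} {C : ℝ} (x₀ : E)
    (hs : Convex ℝ s) (hso : IsOpen s) (hω : DifferentiableOn 𝕜 ω s)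
    (hsymm : ∀ z ∈ s, ∀ v w, fderiv 𝕜 ω z v w = fderiv 𝕜 ω z w v)
    (hC : ∀ z ∈ s, ‖ω z‖ ≤ C) :
    ∃ f : E → F, DifferentiableOn 𝕜 f s ∧ f x₀ = 0 ∧ LipschitzOnWith C.toNNReal f s ∧
      ∀ z ∈ s, fderiv 𝕜 f z = ω z := by
  have hdiff : ∀ z ∈ s, DifferentiableAt 𝕜 ω z := fun z hz =>
    hω.differentiableAt (hso.mem_nhds hz)
  obtain ⟨f, hf⟩ := hs.exists_forall_hasFDerivAt_of_fderiv_symmetric hso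
    (hω.restrictScalars ℝ) fun z hz v w => by
      rw [(hdiff z hz).fderiv_restrictScalars ℝ]
      exact hsymm z hz v w
  have hf₀ : ∀ z ∈ s, HasFDerivAt (fun y => f y - f x₀) (ω z) z := fun z hz =>
    (hf z hz).sub_const _
  refine ⟨fun y => f y - f x₀, fun z hz => (hf₀ z hz).differentiableAt.differentiableWithinAt,
    sub_self _, ?_, fun z hz => (hf₀ z hz).fderiv⟩
  exact hs.lipschitzOnWith_of_nnnorm_hasFDerivWithin_le
    (fun z hz => (hf₀ z hz).hasFDerivWithinAt) fun z hz => NNReal.le_toNNReal_of_coe_le (hC z hz)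

end Convex

/-- Let `B` be the open unit ball of `ℂⁿ` with an arbitrary norm (formalized as
a complex normed space `E` together with a linear identification `e : E ≃ₗ[ℂ] ℂⁿ`).  With the
dual `(ℂⁿ)* = E*` identified with `ℂⁿ` via `F ↦ (w ↦ ∑ j, F j * w j)`, the map
`Φ : 𝓗𝓛₀(B) → 𝓗^∞_s(B, ℂⁿ)`, `Φ g = dg`, is a surjective isometry: `Φ` maps into `𝓗^∞_s`,
`L(g) = sup_{z ∈ B} ‖dg(z)‖`, and every `F ∈ 𝓗^∞_s(B, ℂⁿ)` equals `dg` for a unique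
`g ∈ 𝓗𝓛₀(B)`. -/
theorem stmt2 (n : ℕ) (E : Type*) [NormedAddCommGroup E] [NormedSpace ℂ E]
    (e : E ≃ₗ[ℂ] (Fin n → ℂ)) :
    let B := Metric.ball (0 : E) 1
    let b : Fin n → E := fun j => e.symm (Pi.single j 1)
    let HL0 : (E → ℂ) → Prop := fun g =>
      DifferentiableOn ℂ g B ∧ g 0 = 0 ∧ ∃ K : NNReal, LipschitzOnWith K g B
    let Hs : (E → Fin n → ℂ) → Prop := fun F =>
      DifferentiableOn ℂ F B ∧
      (∃ C : ℝ, ∀ z ∈ B, ∀ v : E, ‖v‖ ≤ 1 → ‖∑ j : Fin n, F z j * (e v) j‖ ≤ C) ∧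
      (∀ z ∈ B, ∀ j k : Fin n,
        fderiv ℂ (fun w => F w j) z (b k) = fderiv ℂ (fun w => F w k) z (b j))
    (∀ g : E → ℂ, HL0 g → Hs (fun z j => fderiv ℂ g z (b j))) ∧
    (∀ g : E → ℂ, HL0 g →
      sInf {K : ℝ | 0 ≤ K ∧ ∀ x ∈ B, ∀ y ∈ B, ‖g x - g y‖ ≤ K * ‖x - y‖} =
        sSup {r : ℝ | ∃ z ∈ B, r = ‖fderiv ℂ g z‖}) ∧
    (∀ F : E → Fin n → ℂ, Hs F →
      ∃ g : E → ℂ,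
        (HL0 g ∧ ∀ z ∈ B, ∀ v : E, fderiv ℂ g z v = ∑ j : Fin n, F z j * (e v) j) ∧
        ∀ g' : E → ℂ,
          (HL0 g' ∧ ∀ z ∈ B, ∀ v : E, fderiv ℂ g' z v = ∑ j : Fin n, F z j * (e v) j) →
          ∀ z ∈ B, g' z = g z) := by
  intro B b HL0 Hs
  have hfin : FiniteDimensional ℂ E := e.symm.finiteDimensional
  have hBo : IsOpen B := isOpen_ball
  have hBc : Convex ℝ B := convex_ball 0 1
  have h0B : (0 : E) ∈ B := mem_ball_self one_pos
  refine ⟨fun g ⟨hg, _, K, hK⟩ => ?_, fun g ⟨hg, _, K, hK⟩ =>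
    sInf_lipschitz_eq_sSup_norm_fderiv hBc hBo ⟨0, h0B⟩ hg hK, fun F ⟨hF, ⟨C, hC⟩, hsymm⟩ => ?_⟩
  · have hg_near (z) (hz : z ∈ B) : ∀ᶠ y in 𝓝 z, DifferentiableAt ℂ g y :=
      hg.eventually_differentiableAt (hBo.mem_nhds hz)
    refine ⟨differentiableOn_pi.2 fun j z hz =>
      (differentiableAt_fderiv_apply (hg_near z hz) (b j)).differentiableWithinAt,
      ⟨K, fun z hz v hv => ?_⟩, fun z hz j k => fderiv_fderiv_apply_comm (hg_near z hz) (b j) (b k)⟩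
    simp only [mul_comm _ (e v _), ← smul_eq_mul, b, sum_smul_apply_single]
    exact ((fderiv ℂ g z).unit_le_opNorm v hv).trans
      (norm_fderiv_le_of_lipschitzOn ℂ (hBo.mem_nhds hz) hK)
  · simp only [mul_comm _ (e _ _), ← smul_eq_mul, ← coordHomEquiv_apply] at hC ⊢
    obtain ⟨g, hgd, hg0, hgL, hg⟩ := exists_lipschitzOnWith_forall_fderiv_eq 0 hBc hBo
      ((coordHomEquiv ℂ e).comp_differentiableOn_iff.2 hF)
      (fun z hz => fderiv_coordHomEquiv_comp_comm e (hF.differentiableAt (hBo.mem_nhds hz))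
        (hsymm z hz))
      fun z hz => opNorm_le_of_forall_norm_le_one (hC z hz)
    refine ⟨g, ⟨⟨hgd, hg0, _, hgL⟩, fun z hz v => DFunLike.congr_fun (hg z hz) v⟩, ?_⟩
    exact fun g' ⟨⟨hgd', hg0', _⟩, hg'⟩ => hBo.eqOn_of_fderiv_eq hBc.isPreconnected hgd' hgd
      (fun z hz => (ContinuousLinearMap.ext (hg' z hz)).trans (hg z hz).symm) h0B
      (hg0'.trans hg0.symm)
end

section
/- Let X be a complex Banach space with open unit ball B_X. The mapping Φ : 𝓗𝓛₀(B_X) → 𝓗^∞_s(B_X, X*) given by Φ(f) = df is a surjective isometry: for every f ∈ 𝓗𝓛₀(B_X) the differential df belongs to 𝓗^∞_s(B_X, X*) with L(f) = sup_{x∈B_X} ‖df(x)‖, and for every g ∈ 𝓗^∞_s(B_X, X*) there exists f ∈ 𝓗𝓛₀(B_X) with df = g. -/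
/-! The derivative of a holomorphic map `f` between Banach spaces is holomorphic: by the Schwarz
lemma the remainder of the first-order Taylor formula is quadratic, locally uniformly in the base
point, so `z ↦ df(z) v` is a uniform limit of difference quotients and hence holomorphic for each
`v`; the same quadratic bound, applied to these maps uniformly in `‖v‖ ≤ 1`, makes `df` itself
holomorphic. Thus `df` is a closed holomorphic `1`-form, and the Poincaré lemma on a convex set
gives the converse. The two norms agree by the mean value inequality. -/

open Metric Filter Topology Set Asymptotics

section PseudoMetric

variable {α : Type*} [PseudoMetricSpace α]

theorem thickening_ball_half_half_subset (x : α) (r : ℝ) :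
    thickening (r / 2) (ball x (r / 2)) ⊆ ball x r := by
  simpa only [add_halves] using Metric.thickening_ball x (r / 2) (r / 2)

theorem exists_ball_subset_forall_norm_le {F : Type*} [SeminormedAddCommGroup F]
    {φ : α → F} {u : Set α} {x : α} (hu : IsOpen u) (hφ : ContinuousOn φ u) (hx : x ∈ u) :
    ∃ r > 0, ball x r ⊆ u ∧ ∃ C, ∀ z ∈ ball x r, ‖φ z‖ ≤ C := by
  have hlt : ∀ᶠ z in 𝓝 x, ‖φ z‖ < ‖φ x‖ + 1 :=
    (hφ.continuousAt (hu.mem_nhds hx)).norm.eventually_lt_const (lt_add_one _)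
  obtain ⟨r, hr, hball⟩ := eventually_nhds_iff_ball.1 (hlt.and (hu.mem_nhds hx))
  exact ⟨r, hr, fun z hz => (hball z hz).2, _, fun z hz => (hball z hz).1.le⟩

end PseudoMetric

theorem fderiv_clm_apply_const {𝕜 E F G : Type*} [NontriviallyNormedField 𝕜]
    [NormedAddCommGroup E] [NormedSpace 𝕜 E] [NormedAddCommGroup F] [NormedSpace 𝕜 F]
    [NormedAddCommGroup G] [NormedSpace 𝕜 G] {A : E → G →L[𝕜] F} {z : E}
    (hA : DifferentiableAt 𝕜 A z) (v : G) (h : E) :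
    fderiv 𝕜 (fun u => A u v) z h = fderiv 𝕜 A z h v := by
  simp [fderiv_clm_apply hA (differentiableAt_const v)]

section Holomorphic

variable {E F G : Type*} [NormedAddCommGroup E] [NormedSpace ℂ E]
  [NormedAddCommGroup F] [NormedSpace ℂ F] [NormedAddCommGroup G] [NormedSpace ℂ G]
  {f : E → F} {s t : Set E} {c h : E} {R M δ : ℝ}

theorem norm_fderiv_le_of_forall_mem_ball_norm_le (hR : 0 < R)
    (hf : DifferentiableOn ℂ f (ball c R)) (hM : ∀ z ∈ ball c R, ‖f z‖ ≤ M) :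
    ‖fderiv ℂ f c‖ ≤ 2 * M / R := by
  refine Complex.norm_fderiv_le_div_of_mapsTo_ball hf (fun z hz => ?_) hR
  rw [mem_closedBall_iff_norm]
  linarith [norm_sub_le (f z) (f c), hM z hz, hM c (mem_ball_self hR)]

theorem norm_sub_sub_fderiv_le_of_forall_mem_ball_norm_le
    (hf : DifferentiableOn ℂ f (ball c R)) (hM : ∀ z ∈ ball c R, ‖f z‖ ≤ M) (hh : ‖h‖ < R) :
    ‖f (c + h) - f c - fderiv ℂ f c h‖ ≤ 4 * M * (‖h‖ / R) ^ 2 := by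
  have hR : 0 < R := (norm_nonneg h).trans_lt hh
  let r : E → F := fun w => f w - fderiv ℂ f c (w - c)
  have hrc : r c = f c := by simp [r]
  have hr_maps : MapsTo r (ball c R) (closedBall (r c) (4 * M)) := fun z hz => by
    have hlin : ‖fderiv ℂ f c (z - c)‖ ≤ 2 * M :=
      calc ‖fderiv ℂ f c (z - c)‖ ≤ 2 * M / R * R :=
            ContinuousLinearMap.le_of_opNorm_le_of_le _
              (norm_fderiv_le_of_forall_mem_ball_norm_le hR hf hM) (mem_ball_iff_norm.1 hz).le
        _ = 2 * M := div_mul_cancel₀ _ hR.ne'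
    rw [mem_closedBall_iff_norm, hrc]
    linarith [hM z hz, hM c (mem_ball_self hR), norm_sub_le (r z) (f c),
      norm_sub_le (f z) (fderiv ℂ f c (z - c))]
  have hr_isLittleO : (r · - r c) =o[𝓝 c] fun w => ‖w - c‖ ^ 1 := by
    have hfc : DifferentiableAt ℂ f c := hf.differentiableAt (ball_mem_nhds c hR)
    simp only [pow_one, hrc]
    exact hfc.hasFDerivAt.isLittleO.norm_right.congr_left fun w => sub_right_comm _ _ _
  have hschwarz := Complex.dist_le_mul_div_pow_of_mapsTo_ball_of_isLittleO
    (hf.sub (by fun_prop)) hr_maps hr_isLittleO (z := c + h) (by simpa using hh)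
  simpa [r, dist_eq_norm, sub_right_comm] using hschwarz

theorem uniformCauchySeqOn_fderiv {ι : Type*} {l : Filter ι} {φ : ι → E → F}
    (hδ : 0 < δ) (hst : thickening δ s ⊆ t) (hd : ∀ᶠ n in l, DifferentiableOn ℂ (φ n) t)
    (hφ : UniformCauchySeqOn φ l t) :
    UniformCauchySeqOn (fun n => fderiv ℂ (φ n)) l s := by
  have hball : ∀ z ∈ s, ball z δ ⊆ t := fun z hz => (ball_subset_thickening hz δ).trans hst
  intro u hu
  obtain ⟨ε, hε, hεu⟩ := mem_uniformity_dist.1 hu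
  have hη : 0 < ε * δ / 4 := by positivity
  filter_upwards [hφ _ (dist_mem_uniformity hη), hd.prod_mk hd] with ⟨m, n⟩ hclose ⟨hm, hn⟩ z hz
  have hdiff : ∀ k, DifferentiableOn ℂ (φ k) t → DifferentiableAt ℂ (φ k) z := fun k hk =>
    hk.differentiableAt (mem_of_superset (ball_mem_nhds z hδ) (hball z hz))
  apply hεu
  calc dist (fderiv ℂ (φ m) z) (fderiv ℂ (φ n) z)
      = ‖fderiv ℂ (φ m - φ n) z‖ := by
        rw [dist_eq_norm, fderiv_sub (hdiff m hm) (hdiff n hn)]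
    _ ≤ 2 * (ε * δ / 4) / δ :=
        norm_fderiv_le_of_forall_mem_ball_norm_le hδ ((hm.sub hn).mono (hball z hz)) fun w hw => by
          simpa [dist_eq_norm] using (hclose w (hball z hz hw)).le
    _ = ε / 2 := by field_simp; ring
    _ < ε := half_lt_self hε

theorem differentiableOn_of_tendstoUniformlyOn_s7 [CompleteSpace F] {ι : Type*} {l : Filter ι}
    [l.NeBot] {φ : ι → E → F} (hs : IsOpen s) (hd : ∀ᶠ n in l, DifferentiableOn ℂ (φ n) s)
    (hφ : TendstoUniformlyOn φ f l s) : DifferentiableOn ℂ f s := by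
  intro c hc
  obtain ⟨R, hR, hRs⟩ := isOpen_iff.1 hs c hc
  have hball : ball c (R / 2) ∈ 𝓝 c := ball_mem_nhds c (half_pos hR)
  have hcauchy : UniformCauchySeqOn (fun n => fderiv ℂ (φ n)) l (ball c (R / 2)) :=
    uniformCauchySeqOn_fderiv (half_pos hR)
      ((thickening_ball_half_half_subset c R).trans hRs) hd hφ.uniformCauchySeqOn
  have hlim : TendstoUniformlyOn (fun n => fderiv ℂ (φ n))
      (fun z => lim (map (fun n => fderiv ℂ (φ n) z) l)) l (ball c (R / 2)) :=
    hcauchy.tendstoUniformlyOn_of_tendsto fun z hz => (hcauchy.cauchy_map hz).le_nhds_lim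
  refine (hasFDerivAt_of_tendstoUniformlyOnFilter (f := φ)
    (hlim.tendstoUniformlyOnFilter.mono_right (le_principal_iff.2 hball)) ?_ ?_)
    |>.differentiableAt.differentiableWithinAt
  · filter_upwards [hd.prod_mk (hs.eventually_mem hc)] with ⟨n, z⟩ ⟨hn, hz⟩
    exact (hn.differentiableAt (hs.mem_nhds hz)).hasFDerivAt
  · filter_upwards [hs.eventually_mem hc] with z hz using hφ.tendsto_at hz

theorem tendstoUniformlyOn_inv_smul_sub_fderiv_apply (hδ : 0 < δ) (hst : thickening δ s ⊆ t)
    (hf : DifferentiableOn ℂ f t) (hM : ∀ z ∈ t, ‖f z‖ ≤ M) (v : E) :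
    TendstoUniformlyOn (fun (τ : ℂ) z => τ⁻¹ • (f (z + τ • v) - f z))
      (fun z => fderiv ℂ f z v) (𝓝[≠] 0) s := by
  rw [Metric.tendstoUniformlyOn_iff]
  intro ε hε
  have hsmall : ∀ᶠ τ : ℂ in 𝓝[≠] 0, ‖τ • v‖ < δ ∧ 4 * M * (‖v‖ / δ) ^ 2 * ‖τ‖ < ε := by
    refine nhdsWithin_le_nhds (Eventually.and ?_ ?_)
    · exact ContinuousAt.eventually_lt (by fun_prop) continuousAt_const (by simpa using hδ)
    · exact ContinuousAt.eventually_lt (by fun_prop) continuousAt_const (by simpa using hε)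
  filter_upwards [hsmall, self_mem_nhdsWithin] with τ ⟨hτδ, hτε⟩ (hτ : τ ≠ 0) z hz
  have hball : ball z δ ⊆ t := (ball_subset_thickening hz δ).trans hst
  have htaylor := norm_sub_sub_fderiv_le_of_forall_mem_ball_norm_le (hf.mono hball)
    (fun w hw => hM w (hball hw)) hτδ
  calc dist (fderiv ℂ f z v) (τ⁻¹ • (f (z + τ • v) - f z))
      = ‖τ⁻¹ • (f (z + τ • v) - f z - fderiv ℂ f z (τ • v))‖ := by
        rw [dist_comm, dist_eq_norm, smul_sub τ⁻¹ (_ - _), map_smul, inv_smul_smul₀ hτ]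
    _ ≤ ‖τ‖⁻¹ * (4 * M * (‖τ • v‖ / δ) ^ 2) := by
        rw [norm_smul, norm_inv]
        gcongr
    _ = 4 * M * (‖v‖ / δ) ^ 2 * ‖τ‖ := by
        rw [norm_smul]
        field_simp [norm_ne_zero_iff.2 hτ]
    _ < ε := hτε

theorem differentiableOn_fderiv_apply [CompleteSpace F] (hs : IsOpen s)
    (hf : DifferentiableOn ℂ f s) (v : E) : DifferentiableOn ℂ (fun z => fderiv ℂ f z v) s := by
  intro c hc
  obtain ⟨R, hR, hRs, M, hM⟩ := exists_ball_subset_forall_norm_le hs hf.continuousOn hc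
  have hfR : DifferentiableOn ℂ f (ball c R) := hf.mono hRs
  have hthick := thickening_ball_half_half_subset c R
  have hquot : ∀ᶠ τ : ℂ in 𝓝[≠] 0,
      DifferentiableOn ℂ (fun z => τ⁻¹ • (f (z + τ • v) - f z)) (ball c (R / 2)) := by
    have hsmall : ∀ᶠ τ : ℂ in 𝓝 0, ‖τ • v‖ < R / 2 :=
      ContinuousAt.eventually_lt (by fun_prop) continuousAt_const (by simpa using hR)
    filter_upwards [nhdsWithin_le_nhds hsmall] with τ hτ
    have hshift : MapsTo (· + τ • v) (ball c (R / 2)) (ball c R) := fun z hz =>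
      hthick (mem_thickening_iff.2 ⟨z, hz, by simpa using hτ⟩)
    exact ((hfR.comp (by fun_prop) hshift).sub
      (hfR.mono (ball_subset_ball (half_le_self hR.le)))).const_smul _
  have hlim : DifferentiableOn ℂ (fun z => fderiv ℂ f z v) (ball c (R / 2)) :=
    differentiableOn_of_tendstoUniformlyOn_s7 isOpen_ball hquot
      (tendstoUniformlyOn_inv_smul_sub_fderiv_apply (half_pos hR) hthick hfR hM v)
  exact (hlim.differentiableAt (ball_mem_nhds c (half_pos hR))).differentiableWithinAt

theorem exists_clm_apply_eq_fderiv_apply {A : E → G →L[ℂ] F} (hR : 0 < R)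
    (hA : ∀ v, DifferentiableOn ℂ (fun z => A z v) (ball c R))
    (hM : ∀ z ∈ ball c R, ‖A z‖ ≤ M) :
    ∃ L : G →L[ℂ] E →L[ℂ] F, ∀ v, L v = fderiv ℂ (fun z => A z v) c := by
  have hAc : ∀ v, DifferentiableAt ℂ (fun z => A z v) c := fun v =>
    (hA v).differentiableAt (ball_mem_nhds c hR)
  let L : G →ₗ[ℂ] E →L[ℂ] F :=
    { toFun := fun v => fderiv ℂ (fun z => A z v) c
      map_add' := fun v w => by
        simp only [map_add]
        exact fderiv_fun_add (hAc v) (hAc w)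
      map_smul' := fun a v => by
        simp only [map_smul, RingHom.id_apply]
        exact fderiv_fun_const_smul (hAc v) a }
  refine ⟨L.mkContinuous (2 * M / R) fun v => ?_, fun v => rfl⟩
  calc ‖L v‖ ≤ 2 * (M * ‖v‖) / R := norm_fderiv_le_of_forall_mem_ball_norm_le hR (hA v)
        fun z hz => (A z).le_of_opNorm_le (hM z hz) v
    _ = 2 * M / R * ‖v‖ := by ring

theorem differentiableAt_clm_of_forall_apply {A : E → G →L[ℂ] F} (hR : 0 < R)
    (hA : ∀ v, DifferentiableOn ℂ (fun z => A z v) (ball c R))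
    (hM : ∀ z ∈ ball c R, ‖A z‖ ≤ M) : DifferentiableAt ℂ A c := by
  obtain ⟨L, hL⟩ := exists_clm_apply_eq_fderiv_apply hR hA hM
  have hM₀ : 0 ≤ M := (norm_nonneg _).trans (hM c (mem_ball_self hR))
  have hremainder : ∀ᶠ h in 𝓝 (0 : E),
      ‖A (c + h) - A c - L.flip h‖ ≤ 4 * M / R ^ 2 * ‖‖h‖ ^ 2‖ := by
    filter_upwards [ball_mem_nhds (0 : E) hR] with h hh
    refine ContinuousLinearMap.opNorm_le_bound _ (by positivity) fun v => ?_
    calc ‖A (c + h) v - A c v - L v h‖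
        ≤ 4 * (M * ‖v‖) * (‖h‖ / R) ^ 2 := by
          rw [hL]
          exact norm_sub_sub_fderiv_le_of_forall_mem_ball_norm_le (hA v)
            (fun z hz => (A z).le_of_opNorm_le (hM z hz) v) (mem_ball_zero_iff.1 hh)
      _ = 4 * M / R ^ 2 * ‖‖h‖ ^ 2‖ * ‖v‖ := by
          rw [norm_pow, norm_norm]
          ring
  have hderiv : HasFDerivAt A L.flip c := hasFDerivAt_iff_isLittleO_nhds_zero.2 <|
    (IsBigO.of_bound _ hremainder).trans_isLittleO (isLittleO_norm_pow_id one_lt_two)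
  exact hderiv.differentiableAt

theorem differentiableOn_fderiv [CompleteSpace F] (hs : IsOpen s) (hf : DifferentiableOn ℂ f s) :
    DifferentiableOn ℂ (fderiv ℂ f) s := by
  intro c hc
  obtain ⟨R, hR, hRs, M, hM⟩ := exists_ball_subset_forall_norm_le hs hf.continuousOn hc
  have hbound : ∀ z ∈ ball c (R / 2), ‖fderiv ℂ f z‖ ≤ 2 * M / (R / 2) := fun z hz => by
    have hball : ball z (R / 2) ⊆ ball c R :=
      (ball_subset_thickening hz _).trans (thickening_ball_half_half_subset c R)
    exact norm_fderiv_le_of_forall_mem_ball_norm_le (half_pos hR)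
      (hf.mono (hball.trans hRs)) fun w hw => hM w (hball hw)
  have happly : ∀ v, DifferentiableOn ℂ (fun z => fderiv ℂ f z v) (ball c (R / 2)) := fun v =>
    (differentiableOn_fderiv_apply hs hf v).mono
      ((ball_subset_ball (half_le_self hR.le)).trans hRs)
  exact (differentiableAt_clm_of_forall_apply (half_pos hR) happly hbound).differentiableWithinAt

end Holomorphic

section ConvexDomain

variable {𝕜 E F : Type*} [RCLike 𝕜] [NormedAddCommGroup E] [NormedSpace 𝕜 E]
  [NormedSpace ℝ E] [NormedAddCommGroup F] [NormedSpace 𝕜 F] {s : Set E}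

theorem sInf_lipschitz_constants_eq_sSup_norm_fderiv {f : E → F} {K : NNReal}
    (hs : IsOpen s) (hconv : Convex ℝ s) (hf : DifferentiableOn 𝕜 f s)
    (hK : LipschitzOnWith K f s) :
    sInf {C : ℝ | 0 ≤ C ∧ ∀ x ∈ s, ∀ y ∈ s, ‖f x - f y‖ ≤ C * ‖x - y‖} =
      sSup {r : ℝ | ∃ z ∈ s, r = ‖fderiv 𝕜 f z‖} := by
  have hbdd : BddAbove {r : ℝ | ∃ z ∈ s, r = ‖fderiv 𝕜 f z‖} := by
    refine ⟨K, ?_⟩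
    rintro r ⟨z, hz, rfl⟩
    exact norm_fderiv_le_of_lipschitzOn 𝕜 (hs.mem_nhds hz) hK
  apply le_antisymm
  · refine csInf_le ⟨0, fun C hC => hC.1⟩ ⟨Real.sSup_nonneg ?_, fun x hx y hy => ?_⟩
    · rintro r ⟨z, -, rfl⟩
      exact norm_nonneg _
    · exact hconv.norm_image_sub_le_of_norm_fderiv_le
        (fun z hz => hf.differentiableAt (hs.mem_nhds hz))
        (fun z hz => le_csSup hbdd ⟨z, hz, rfl⟩) hy hx
  · refine le_csInf ⟨K, K.coe_nonneg, fun x hx y hy => hK.norm_sub_le hx hy⟩ ?_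
    rintro C ⟨hC₀, hC⟩
    refine Real.sSup_le ?_ hC₀
    rintro r ⟨z, hz, rfl⟩
    refine norm_fderiv_le_of_lip' 𝕜 hC₀ ?_
    filter_upwards [hs.mem_nhds hz] with x hx using hC x hx z hz

theorem exists_forall_hasFDerivAt_of_symmetric [CompleteSpace F] {ω : E → E →L[𝕜] F}
    (hs : IsOpen s) (hconv : Convex ℝ s) (hω : DifferentiableOn 𝕜 ω s)
    (hsymm : ∀ z ∈ s, ∀ x y, fderiv 𝕜 ω z x y = fderiv 𝕜 ω z y x) :
    ∃ f : E → F, ∀ z ∈ s, HasFDerivAt f (ω z) z := by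
  let : NormedSpace ℝ F := .restrictScalars ℝ 𝕜 F
  have hωz : ∀ z ∈ s, HasFDerivAt ω ((fderiv 𝕜 ω z).restrictScalars ℝ) z := fun z hz =>
    (hω.differentiableAt (hs.mem_nhds hz)).hasFDerivAt.restrictScalars ℝ
  obtain ⟨f, hf⟩ := hconv.exists_forall_hasFDerivWithinAt_of_hasFDerivWithinAt_symmetric
    (fun z hz => (hωz z hz).hasFDerivWithinAt) (fun z hz x _ y _ => hsymm z hz x y)
  exact ⟨f, fun z hz => (hf z hz).hasFDerivAt (hs.mem_nhds hz)⟩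

end ConvexDomain

section PointedDomain

variable {E F : Type*} [NormedAddCommGroup E] [NormedSpace ℂ E]
  [NormedAddCommGroup F] [NormedSpace ℂ F] {s : Set E} {x₀ : E}

/-- Membership in the space `𝓗𝓛₀` of holomorphic Lipschitz maps on `s` that vanish at the base
point `x₀`. Such a map is a total function of which only the restriction to `s` matters. -/
def IsHolLipschitzOn (s : Set E) (x₀ : E) (f : E → F) : Prop :=
  DifferentiableOn ℂ f s ∧ f x₀ = 0 ∧ ∃ K : NNReal, LipschitzOnWith K f s

/-- Membership in the space `𝓗^∞_s` of bounded holomorphic operator-valued maps on `s` with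
symmetric derivative, i.e. bounded closed holomorphic `1`-forms. The symmetry is expressed by the
maps `x ∘ g` of the paper, written `u ↦ g u x`. -/
def IsBddHolSymmOn (s : Set E) (g : E → E →L[ℂ] F) : Prop :=
  DifferentiableOn ℂ g s ∧ (∃ C : ℝ, ∀ z ∈ s, ‖g z‖ ≤ C) ∧
    ∀ x y : E, ∀ z ∈ s, fderiv ℂ (fun u => g u x) z y = fderiv ℂ (fun u => g u y) z x

theorem IsHolLipschitzOn.isBddHolSymmOn_fderiv [CompleteSpace F] {f : E → F} (hs : IsOpen s)
    (hf : IsHolLipschitzOn s x₀ f) : IsBddHolSymmOn s (fderiv ℂ f) := by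
  obtain ⟨hd, -, K, hK⟩ := hf
  have hd₂ : DifferentiableOn ℂ (fderiv ℂ f) s := differentiableOn_fderiv hs hd
  refine ⟨hd₂, ⟨K, fun z hz => norm_fderiv_le_of_lipschitzOn ℂ (hs.mem_nhds hz) hK⟩,
    fun x y z hz => ?_⟩
  have hd₂z : DifferentiableAt ℂ (fderiv ℂ f) z := hd₂.differentiableAt (hs.mem_nhds hz)
  have hfderiv : ∀ᶠ w in 𝓝 z, HasFDerivAt f (fderiv ℂ f w) w := by
    filter_upwards [hs.mem_nhds hz] with w hw
    exact (hd.differentiableAt (hs.mem_nhds hw)).hasFDerivAt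
  rw [fderiv_clm_apply_const hd₂z, fderiv_clm_apply_const hd₂z]
  exact second_derivative_symmetric_of_eventually hfderiv hd₂z.hasFDerivAt y x

theorem IsBddHolSymmOn.exists_isHolLipschitzOn_fderiv_eq [CompleteSpace F] {g : E → E →L[ℂ] F}
    (hs : IsOpen s) (hconv : Convex ℝ s) (hg : IsBddHolSymmOn s g) (x₀ : E) :
    ∃ f : E → F, IsHolLipschitzOn s x₀ f ∧ ∀ z ∈ s, fderiv ℂ f z = g z := by
  obtain ⟨hd, ⟨C, hC⟩, hsymm⟩ := hg
  have hclosed : ∀ z ∈ s, ∀ x y, fderiv ℂ g z x y = fderiv ℂ g z y x := fun z hz x y => by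
    have hgz : DifferentiableAt ℂ g z := hd.differentiableAt (hs.mem_nhds hz)
    rw [← fderiv_clm_apply_const hgz, ← fderiv_clm_apply_const hgz, hsymm y x z hz]
  obtain ⟨f, hf⟩ := exists_forall_hasFDerivAt_of_symmetric hs hconv hd hclosed
  have hf₀ : ∀ z ∈ s, HasFDerivAt (fun w => f w - f x₀) (g z) z := fun z hz =>
    (hf z hz).sub_const _
  have hlip : LipschitzOnWith C.toNNReal (fun w => f w - f x₀) s :=
    hconv.lipschitzOnWith_of_nnnorm_hasFDerivWithin_le
      (fun z hz => (hf₀ z hz).hasFDerivWithinAt)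
      (fun z hz => NNReal.le_toNNReal_of_coe_le (hC z hz))
  exact ⟨fun w => f w - f x₀,
    ⟨fun z hz => (hf₀ z hz).differentiableAt.differentiableWithinAt, sub_self _, _, hlip⟩,
    fun z hz => (hf₀ z hz).fderiv⟩

theorem stmt7_general [CompleteSpace F] (hs : IsOpen s) (hconv : Convex ℝ s) (x₀ : s) :
    (∀ f : E → F, IsHolLipschitzOn s x₀ f → IsBddHolSymmOn s (fderiv ℂ f)) ∧
    (∀ f : E → F, IsHolLipschitzOn s x₀ f →
      sInf {K : ℝ | 0 ≤ K ∧ ∀ x ∈ s, ∀ y ∈ s, ‖f x - f y‖ ≤ K * ‖x - y‖} =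
        sSup {r : ℝ | ∃ z ∈ s, r = ‖fderiv ℂ f z‖}) ∧
    (∀ g : E → E →L[ℂ] F, IsBddHolSymmOn s g →
      ∃ f : E → F, IsHolLipschitzOn s x₀ f ∧ ∀ z ∈ s, fderiv ℂ f z = g z) :=
  ⟨fun _ hf => hf.isBddHolSymmOn_fderiv hs,
    fun _ ⟨hd, _, _, hK⟩ => sInf_lipschitz_constants_eq_sSup_norm_fderiv hs hconv hd hK,
    fun _ hg => hg.exists_isHolLipschitzOn_fderiv_eq hs hconv x₀⟩

end PointedDomain

/-- Let `X` be a complex Banach space with open unit ball `B_X`.  The map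
`Φ : 𝓗𝓛₀(B_X) → 𝓗^∞_s(B_X, X*)`, `Φ f = df`, is a surjective isometry: for `f ∈ 𝓗𝓛₀(B_X)`
the differential `df` belongs to `𝓗^∞_s(B_X, X*)` and `L(f) = sup_{x ∈ B_X} ‖df(x)‖`, and
every `g ∈ 𝓗^∞_s(B_X, X*)` equals `df` for some `f ∈ 𝓗𝓛₀(B_X)`. -/
theorem stmt7 (X : Type*) [NormedAddCommGroup X] [NormedSpace ℂ X] [CompleteSpace X] :
    let B := Metric.ball (0 : X) 1
    let HL0 : (X → ℂ) → Prop := fun f =>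
      DifferentiableOn ℂ f B ∧ f 0 = 0 ∧ ∃ K : NNReal, LipschitzOnWith K f B
    let Hs : (X → (X →L[ℂ] ℂ)) → Prop := fun g =>
      DifferentiableOn ℂ g B ∧ (∃ C : ℝ, ∀ z ∈ B, ‖g z‖ ≤ C) ∧
      ∀ x y : X, ∀ z ∈ B,
        fderiv ℂ (fun u => g u x) z y = fderiv ℂ (fun u => g u y) z x
    (∀ f : X → ℂ, HL0 f → Hs (fun z => fderiv ℂ f z)) ∧
    (∀ f : X → ℂ, HL0 f →
      sInf {K : ℝ | 0 ≤ K ∧ ∀ x ∈ B, ∀ y ∈ B, ‖f x - f y‖ ≤ K * ‖x - y‖} =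
        sSup {r : ℝ | ∃ z ∈ B, r = ‖fderiv ℂ f z‖}) ∧
    (∀ g : X → (X →L[ℂ] ℂ), Hs g →
      ∃ f : X → ℂ, HL0 f ∧ ∀ z ∈ B, fderiv ℂ f z = g z) :=
  stmt7_general isOpen_ball (convex_ball 0 1) ⟨0, mem_ball_self one_pos⟩
end
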